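/- Let N ≥ 1 be an integer and consider the curve E_N : y² = x³ − N²·x over ℂ. Let n ≥ 1 be an integer and let Q = (x_Q, y_Q) be an affine point of E_N(ℂ) with nQ = O (i.e. Q is a point of order dividing n, other than the identity). Then |x_Q| ≤ (1/2)·n²·N. -/

import Mathlib

/-- The curve `E_N : y² = x³ - N²x` over `ℂ`. -/
def congruentCurveC (N : ℕ) : WeierstrassCurve.Affine ℂ :=
  { a₁ := 0, a₂ := 0, a₃ := 0, a₄ := -(N : ℂ) ^ 2, a₆ := 0 }

/-!
Put `u(P) = c / x(P)` on `y² = x³ - c²x`. The function `u` vanishes to second order at the identity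
and satisfies `u(P + Q) + u(P - Q) = 2 (p + q) (1 - p q) / (1 + p q)²`, where `p = u(P)` and
`q = u(Q)`. To first order the right-hand side is `2 (p + q)`, and the sequence `k² a` solves the
recurrence `v (k + 1) + v (k - 1) = 2 (a + v k)`; a comparison of second differences therefore gives
`u(kP) = k² a + O(|a|³ k⁶)` for `a = u(P)`, as long as `k² |a| ≤ 1 / 2`. If `n² |a| < 2`, this
covers `k ≤ n / 2`, which is enough to exclude `nP = 0`: such a relation makes `kP` a point of order
at most two if `n = 2 k`, and gives `u((k + 1)P) = u(kP)` if `n = 2 k + 1`.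
-/

open WeierstrassCurve.Affine

section Algebra

variable {F : Type*} [Field F]

/-- The curve `y² = x³ - c²x` over a field, the analogue of `congruentCurveC` with an arbitrary
parameter `c`. -/
def congruentCurve (c : F) : WeierstrassCurve.Affine F :=
  { a₁ := 0, a₂ := 0, a₃ := 0, a₄ := -c ^ 2, a₆ := 0 }

/-- The value of `u(P + Q) + u(P - Q)` in terms of `p = u(P)` and `q = u(Q)`, where `u = c / x` on
the curve `y² = x³ - c²x`. -/
def pairSum (p q : F) : F :=
  2 * (p + q) * (1 - p * q) / (1 + p * q) ^ 2

/-- The values `u(kP)` in terms of `a = u(P)`, where `u = c / x` on the curve `y² = x³ - c²x`. They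
are computed from the recurrence `u((k + 2)P) + u(kP) = pairSum a u((k + 1)P)`, so they are
meaningful only as long as the denominators `1 + a * u((k + 1)P)` do not vanish. -/
def invXMultiple (a : F) : ℕ → F
  | 0 => 0
  | 1 => a
  | k + 2 => pairSum a (invXMultiple a (k + 1)) - invXMultiple a k

/-- `HasInvX P u` says that the function `c / x` on the curve `y² = x³ - c²x` is defined at `P` and
takes the value `u` there. For `c ≠ 0` this fails only at `P = (0, 0)`, where `c / x` has a pole;
the value at the identity is `0`. -/
def HasInvX {c : F} : (congruentCurve c).Point → F → Prop
  | .zero, u => u = 0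
  | .some x _ _, u => x * u = c

lemma pairSum_self_ne_zero [NeZero (2 : F)] {p : F} (hp₀ : p ≠ 0) (hadd : 1 + p * p ≠ 0)
    (hsub : 1 - p * p ≠ 0) : pairSum p p ≠ 0 := by
  have h2 : (2 : F) ≠ 0 := two_ne_zero
  rw [pairSum, ← two_mul]
  exact div_ne_zero (mul_ne_zero (mul_ne_zero h2 (mul_ne_zero h2 hp₀)) hsub) (pow_ne_zero 2 hadd)

variable {c : F}

lemma congruentCurve_negY (x y : F) : (congruentCurve c).negY x y = -y := by
  simp [negY, congruentCurve]

lemma congruentCurve_addX (x₁ x₂ l : F) :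
    (congruentCurve c).addX x₁ x₂ l = l ^ 2 - x₁ - x₂ := by
  simp [addX, congruentCurve]

lemma congruentCurve_equation_iff (x y : F) :
    (congruentCurve c).Equation x y ↔ y ^ 2 = x ^ 3 - c ^ 2 * x := by
  simp [equation_iff, congruentCurve, sub_eq_add_neg]

namespace HasInvX

variable {P : (congruentCurve c).Point} {u v : F}

@[simp]
lemma zero_iff : HasInvX (0 : (congruentCurve c).Point) u ↔ u = 0 :=
  Iff.rfl

@[simp]
lemma some_iff {x y : F} {h : (congruentCurve c).Nonsingular x y} :
    HasInvX (.some x y h) u ↔ x * u = c :=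
  Iff.rfl

lemma neg (h : HasInvX P u) : HasInvX (-P) u := by
  cases P <;> exact h

lemma unique (hc : c ≠ 0) (hu : HasInvX P u) (hv : HasInvX P v) : u = v := by
  match P with
  | 0 => exact hu.trans hv.symm
  | .some _ _ _ =>
    have hx := left_ne_zero_of_mul (hu.trans_ne hc)
    exact mul_left_cancel₀ hx (hu.trans hv.symm)

end HasInvX

section Chord

variable [DecidableEq F] {x₁ y₁ x₂ y₂ : F}

lemma congruentCurve_addX_add_addX
    (h₁ : (congruentCurve c).Equation x₁ y₁) (h₂ : (congruentCurve c).Equation x₂ y₂)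
    (hx : x₁ ≠ x₂) :
    ((congruentCurve c).addX x₁ x₂ ((congruentCurve c).slope x₁ x₂ y₁ y₂) +
        (congruentCurve c).addX x₁ x₂ ((congruentCurve c).slope x₁ x₂ y₁ (-y₂))) *
      (x₁ - x₂) ^ 2 = 2 * (x₁ + x₂) * (x₁ * x₂ - c ^ 2) := by
  rw [congruentCurve_equation_iff] at h₁ h₂
  have hd : x₁ - x₂ ≠ 0 := sub_ne_zero.mpr hx
  simp only [congruentCurve_addX, slope_of_X_ne hx]
  field_simp
  linear_combination 2 * h₁ + 2 * h₂

lemma congruentCurve_addX_mul_addX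
    (h₁ : (congruentCurve c).Equation x₁ y₁) (h₂ : (congruentCurve c).Equation x₂ y₂)
    (hx : x₁ ≠ x₂) :
    (congruentCurve c).addX x₁ x₂ ((congruentCurve c).slope x₁ x₂ y₁ y₂) *
        (congruentCurve c).addX x₁ x₂ ((congruentCurve c).slope x₁ x₂ y₁ (-y₂)) *
      (x₁ - x₂) ^ 2 = (x₁ * x₂ + c ^ 2) ^ 2 := by
  rw [congruentCurve_equation_iff] at h₁ h₂
  have hd : x₁ - x₂ ≠ 0 := sub_ne_zero.mpr hx
  have hprod : ((y₁ - y₂) ^ 2 - (x₁ + x₂) * (x₁ - x₂) ^ 2) *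
      ((y₁ + y₂) ^ 2 - (x₁ + x₂) * (x₁ - x₂) ^ 2) =
      (y₁ ^ 2 - y₂ ^ 2) ^ 2 - 2 * (x₁ + x₂) * (x₁ - x₂) ^ 2 * (y₁ ^ 2 + y₂ ^ 2) +
        (x₁ + x₂) ^ 2 * (x₁ - x₂) ^ 4 := by ring
  rw [h₁, h₂] at hprod
  simp only [congruentCurve_addX, slope_of_X_ne hx]
  field_simp
  linear_combination hprod

lemma congruentCurve_addX_self {x y : F} (h : (congruentCurve c).Equation x y)
    (hy : y ≠ -y) :
    (congruentCurve c).addX x x ((congruentCurve c).slope x x y y) * (2 * y) ^ 2 =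
      (x ^ 2 + c ^ 2) ^ 2 := by
  have h2y : 2 * y ≠ 0 := fun h0 => hy (by linear_combination h0)
  have hslope : (congruentCurve c).slope x x y y = (3 * x ^ 2 - c ^ 2) / (2 * y) := by
    rw [slope_of_Y_ne rfl (by rwa [congruentCurve_negY]), congruentCurve_negY]
    simp only [congruentCurve]
    ring
  rw [congruentCurve_equation_iff] at h
  rw [congruentCurve_addX, hslope, div_pow, sub_mul, sub_mul, div_mul_cancel₀ _ (pow_ne_zero 2 h2y)]
  linear_combination (-8 * x) * h

end Chord

namespace HasInvX

variable [DecidableEq F] {P Q : (congruentCurve c).Point} {m p q : F}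

lemma add_self (hc : c ≠ 0) (hP : HasInvX P p) (hp : 1 + p * p ≠ 0) :
    HasInvX (P + P) (pairSum p p) := by
  match P with
  | 0 =>
    rw [zero_iff] at hP
    simp [pairSum, hP]
  | .some x y h =>
    rw [some_iff] at hP
    have hx : x ≠ 0 := left_ne_zero_of_mul (hP.trans_ne hc)
    have heq := (congruentCurve_equation_iff x y).mp h.1
    by_cases hy : y = -y
    · have hfour : 4 * (1 - p * p) = 0 := by
        refine (mul_eq_zero.mp ?_).resolve_left (pow_ne_zero 3 hx)
        linear_combination 2 * y * hy - 4 * heq + 4 * x * (-c - x * p) * hP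
      rw [Point.add_self_of_Y_eq (by rwa [congruentCurve_negY]), zero_iff, pairSum, div_eq_zero_iff]
      left
      linear_combination p * hfour
    · rw [Point.add_self_of_Y_ne (by rwa [congruentCurve_negY]), some_iff, pairSum]
      have h2y : 2 * y ≠ 0 := fun h0 => hy (by linear_combination h0)
      have hX := congruentCurve_addX_self h.1 hy
      rw [← mul_div_assoc, div_eq_iff (pow_ne_zero 2 hp)]
      refine mul_left_cancel₀ (pow_ne_zero 2 h2y) ?_
      subst hP
      linear_combination (4 * p * (1 - p * p)) * hX - 4 * x * p * (1 + p * p) ^ 2 * heq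

lemma add_some_of_X_ne (hc : c ≠ 0) {x₁ y₁ x₂ y₂ : F} {h₁ : (congruentCurve c).Nonsingular x₁ y₁}
    {h₂ : (congruentCurve c).Nonsingular x₂ y₂} (hx : x₁ ≠ x₂) (hP : HasInvX (.some x₁ y₁ h₁) p)
    (hQ : HasInvX (.some x₂ y₂ h₂) q) (hm : HasInvX (.some x₁ y₁ h₁ - .some x₂ y₂ h₂) m)
    (hpq : 1 + p * q ≠ 0) :
    HasInvX (.some x₁ y₁ h₁ + .some x₂ y₂ h₂) (pairSum p q - m) := by
  have hadd := congruentCurve_addX_add_addX h₁.1 h₂.1 hx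
  have hmul := congruentCurve_addX_mul_addX h₁.1 h₂.1 hx
  rw [sub_eq_add_neg, Point.neg_some, Point.add_of_X_ne hx, some_iff, congruentCurve_negY] at hm
  rw [Point.add_of_X_ne hx, some_iff]
  rw [some_iff] at hP hQ
  generalize (congruentCurve c).addX x₁ x₂ ((congruentCurve c).slope x₁ x₂ y₁ y₂) = X at *
  generalize (congruentCurve c).addX x₁ x₂ ((congruentCurve c).slope x₁ x₂ y₁ (-y₂)) = Y at *
  have hx₁ : x₁ ≠ 0 := left_ne_zero_of_mul (hP.trans_ne hc)
  have hx₂ : x₂ ≠ 0 := left_ne_zero_of_mul (hQ.trans_ne hc)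
  have hY : Y ≠ 0 := left_ne_zero_of_mul (hm.trans_ne hc)
  have hd : x₁ - x₂ ≠ 0 := sub_ne_zero.mpr hx
  have hsum : X * Y * pairSum p q = c * (X + Y) := by
    rw [pairSum, ← mul_div_assoc, div_eq_iff (pow_ne_zero 2 hpq)]
    refine mul_left_cancel₀ (pow_ne_zero 2 hd) ?_
    have hone_add : x₁ * x₂ + c ^ 2 = x₁ * x₂ * (1 + p * q) := by
      linear_combination -c * hP - x₁ * p * hQ
    have hone_sub : x₁ * x₂ - c ^ 2 = x₁ * x₂ * (1 - p * q) := by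
      linear_combination c * hP + x₁ * p * hQ
    have hadd_inv : c * (x₁ + x₂) = x₁ * x₂ * (p + q) := by
      linear_combination -x₂ * hP - x₁ * hQ
    rw [hone_add] at hmul
    rw [hone_sub] at hadd
    linear_combination (2 * (p + q) * (1 - p * q)) * hmul - c * (1 + p * q) ^ 2 * hadd
      - 2 * x₁ * x₂ * (1 - p * q) * (1 + p * q) ^ 2 * hadd_inv
  refine mul_left_cancel₀ hY ?_
  linear_combination hsum - X * hm

lemma add (hc : c ≠ 0) (hP : HasInvX P p) (hQ : HasInvX Q q) (hm : HasInvX (P - Q) m)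
    (hpq : 1 + p * q ≠ 0) : HasInvX (P + Q) (pairSum p q - m) := by
  by_cases hPQ : P = Q
  · subst hPQ
    obtain rfl := hP.unique hc hQ
    rw [sub_self, zero_iff] at hm
    simpa [hm] using hP.add_self hc hpq
  by_cases hPQ' : P = -Q
  · subst hPQ'
    obtain rfl := hP.unique hc hQ.neg
    have h := (hP.add_self hc hpq).unique hc (by rwa [← sub_eq_add_neg])
    simp [h]
  match P, Q with
  | 0, Q =>
    rw [zero_sub] at hm
    obtain rfl := hm.unique hc hQ.neg
    rw [zero_iff] at hP
    convert hQ using 1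
    · exact zero_add _
    · simp only [hP, pairSum]
      ring
  | P, 0 =>
    rw [sub_zero] at hm
    obtain rfl := hm.unique hc hP
    rw [zero_iff] at hQ
    convert hP using 1
    · exact add_zero _
    · simp only [hQ, pairSum]
      ring
  | .some x₁ y₁ h₁, .some x₂ y₂ h₂ =>
    have hx : x₁ ≠ x₂ := fun hx => (Point.X_eq_iff.mp hx).elim hPQ hPQ'
    exact add_some_of_X_ne hc hx hP hQ hm hpq

end HasInvX

end Algebra

section Estimates

lemma one_add_ne_zero_of_norm_lt_one {R : Type*} [SeminormedRing R] [NormOneClass R] {v : R}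
    (hv : ‖v‖ < 1) : 1 + v ≠ 0 := by
  intro h
  rw [eq_neg_of_add_eq_zero_right h, norm_neg, norm_one] at hv
  exact hv.false

variable {𝕜 : Type*} [RCLike 𝕜]

lemma norm_pairSum_sub_le {p q : 𝕜} (hpq : ‖p * q‖ ≤ 3 / 10) :
    ‖pairSum p q - 2 * (p + q)‖ ≤ 27 / 2 * ‖p + q‖ * ‖p * q‖ := by
  have hlow : 7 / 10 ≤ ‖1 + p * q‖ := by
    have := norm_sub_le_norm_add (1 : 𝕜) (p * q)
    rw [norm_one] at this
    linarith
  have hup : ‖3 + p * q‖ ≤ 33 / 10 := by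
    have := norm_add_le (3 : 𝕜) (p * q)
    rw [RCLike.norm_ofNat] at this
    linarith
  have hne : 1 + p * q ≠ 0 := one_add_ne_zero_of_norm_lt_one (by linarith)
  have hdiff : pairSum p q - 2 * (p + q) =
      -(2 * (p + q) * (p * q) * (3 + p * q)) / (1 + p * q) ^ 2 := by
    rw [pairSum]
    field_simp
    ring
  rw [hdiff, norm_div, norm_neg, norm_pow, div_le_iff₀ (by positivity)]
  calc ‖2 * (p + q) * (p * q) * (3 + p * q)‖
      = 2 * (‖p + q‖ * ‖p * q‖) * ‖3 + p * q‖ := by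
        rw [norm_mul, norm_mul, norm_mul, RCLike.norm_ofNat]
        ring
    _ ≤ 2 * (‖p + q‖ * ‖p * q‖) * (33 / 10) := by gcongr
    _ ≤ 27 / 2 * (‖p + q‖ * ‖p * q‖) * (7 / 10) ^ 2 := by
        nlinarith [mul_nonneg (norm_nonneg (p + q)) (norm_nonneg (p * q))]
    _ ≤ 27 / 2 * (‖p + q‖ * ‖p * q‖) * ‖1 + p * q‖ ^ 2 := by gcongr
    _ = 27 / 2 * ‖p + q‖ * ‖p * q‖ * ‖1 + p * q‖ ^ 2 := by ring

lemma norm_natCast_sq_mul (k : ℕ) (a : 𝕜) : ‖(k : 𝕜) ^ 2 * a‖ = (k : ℝ) ^ 2 * ‖a‖ := by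
  rw [norm_mul, norm_pow, RCLike.norm_natCast]

section Step

variable {a u : 𝕜} {k : ℕ}

lemma norm_sub_le_of_sq_mul_norm_le (hk : (k : ℝ) ^ 2 * ‖a‖ ≤ 1 / 2)
    (hu : ‖u - (k : 𝕜) ^ 2 * a‖ ≤ 3 / 5 * ‖a‖ ^ 3 * (k : ℝ) ^ 6) :
    ‖u - (k : 𝕜) ^ 2 * a‖ ≤ 3 / 20 * ((k : ℝ) ^ 2 * ‖a‖) :=
  calc ‖u - (k : 𝕜) ^ 2 * a‖ ≤ 3 / 5 * ‖a‖ ^ 3 * (k : ℝ) ^ 6 := hu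
    _ = 3 / 5 * ((k : ℝ) ^ 2 * ‖a‖) ^ 2 * ((k : ℝ) ^ 2 * ‖a‖) := by ring
    _ ≤ 3 / 5 * (1 / 2) ^ 2 * ((k : ℝ) ^ 2 * ‖a‖) := by gcongr
    _ = 3 / 20 * ((k : ℝ) ^ 2 * ‖a‖) := by ring

lemma norm_le_of_sq_mul_norm_le (hk : (k : ℝ) ^ 2 * ‖a‖ ≤ 1 / 2)
    (hu : ‖u - (k : 𝕜) ^ 2 * a‖ ≤ 3 / 5 * ‖a‖ ^ 3 * (k : ℝ) ^ 6) :
    ‖u‖ ≤ 23 / 20 * ((k : ℝ) ^ 2 * ‖a‖) := by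
  linarith [norm_natCast_sq_mul k a, norm_sub_le_of_sq_mul_norm_le hk hu,
    norm_le_norm_sub_add u ((k : 𝕜) ^ 2 * a)]

lemma norm_mul_le_of_sq_mul_norm_le (hk₀ : 1 ≤ k) (hk : (k : ℝ) ^ 2 * ‖a‖ ≤ 1 / 2)
    (hu : ‖u - (k : 𝕜) ^ 2 * a‖ ≤ 3 / 5 * ‖a‖ ^ 3 * (k : ℝ) ^ 6) :
    ‖a * u‖ ≤ 3 / 10 := by
  have hk₁ : (1 : ℝ) ≤ (k : ℝ) ^ 2 := one_le_pow₀ (by exact_mod_cast hk₀)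
  have ha : ‖a‖ ≤ 1 / 2 := (le_mul_of_one_le_left (norm_nonneg a) hk₁).trans hk
  have hu' : ‖u‖ ≤ 23 / 40 := by linarith [norm_le_of_sq_mul_norm_le hk hu]
  calc ‖a * u‖ = ‖a‖ * ‖u‖ := norm_mul a u
    _ ≤ 1 / 2 * (23 / 40) := by gcongr
    _ ≤ 3 / 10 := by norm_num

lemma one_add_mul_ne_zero_of_sq_mul_norm_le (hk₀ : 1 ≤ k) (hk : (k : ℝ) ^ 2 * ‖a‖ ≤ 1 / 2)
    (hu : ‖u - (k : 𝕜) ^ 2 * a‖ ≤ 3 / 5 * ‖a‖ ^ 3 * (k : ℝ) ^ 6) :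
    1 + a * u ≠ 0 :=
  one_add_ne_zero_of_norm_lt_one <|
    (norm_mul_le_of_sq_mul_norm_le hk₀ hk hu).trans_lt (by norm_num)

lemma norm_pairSum_sub_le_of_sq_mul_norm_le (hk₀ : 1 ≤ k) (hk : (k : ℝ) ^ 2 * ‖a‖ ≤ 1 / 2)
    (hu : ‖u - (k : 𝕜) ^ 2 * a‖ ≤ 3 / 5 * ‖a‖ ^ 3 * (k : ℝ) ^ 6) :
    ‖pairSum a u - 2 * (a + u)‖ ≤ 18 * ‖a‖ ^ 3 * ((k : ℝ) ^ 2 * ((k : ℝ) ^ 2 + 1)) := by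
  have hu' := norm_le_of_sq_mul_norm_le hk hu
  have hsum : ‖a + u‖ ≤ 23 / 20 * (((k : ℝ) ^ 2 + 1) * ‖a‖) := by
    linarith [norm_add_le a u, norm_nonneg a]
  calc ‖pairSum a u - 2 * (a + u)‖ ≤ 27 / 2 * ‖a + u‖ * ‖a * u‖ :=
        norm_pairSum_sub_le (norm_mul_le_of_sq_mul_norm_le hk₀ hk hu)
    _ = 27 / 2 * ‖a + u‖ * (‖a‖ * ‖u‖) := by rw [norm_mul]
    _ ≤ 27 / 2 * (23 / 20 * (((k : ℝ) ^ 2 + 1) * ‖a‖)) *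
          (‖a‖ * (23 / 20 * ((k : ℝ) ^ 2 * ‖a‖))) := by gcongr
    _ = 27 / 2 * (23 / 20) ^ 2 * (‖a‖ ^ 3 * ((k : ℝ) ^ 2 * ((k : ℝ) ^ 2 + 1))) := by ring
    _ ≤ 18 * (‖a‖ ^ 3 * ((k : ℝ) ^ 2 * ((k : ℝ) ^ 2 + 1))) := by
        gcongr
        norm_num
    _ = 18 * ‖a‖ ^ 3 * ((k : ℝ) ^ 2 * ((k : ℝ) ^ 2 + 1)) := by ring

end Step

variable {a : 𝕜}

lemma sq_mul_norm_le_of_succ {k : ℕ} (hk : ((k + 1 : ℕ) : ℝ) ^ 2 * ‖a‖ ≤ 1 / 2) :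
    (k : ℝ) ^ 2 * ‖a‖ ≤ 1 / 2 := by
  refine le_trans ?_ hk
  gcongr
  exact k.le_succ

lemma sq_mul_norm_le_of_two_mul_add_one {k : ℕ} (hk : (2 * (k : ℝ) + 1) ^ 2 * ‖a‖ < 2) :
    (k : ℝ) ^ 2 * ‖a‖ ≤ 1 / 2 := by
  have hsq : (2 * (k : ℝ)) ^ 2 ≤ (2 * (k : ℝ) + 1) ^ 2 := by
    gcongr
    linarith
  linarith [mul_le_mul_of_nonneg_right hsq (norm_nonneg a)]

lemma norm_invXMultiple_sub_le_and_norm_diff_le (k : ℕ) (hk : (k : ℝ) ^ 2 * ‖a‖ ≤ 1 / 2) :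
    ‖invXMultiple a k - (k : 𝕜) ^ 2 * a‖ ≤ 3 / 5 * ‖a‖ ^ 3 * (k : ℝ) ^ 6 ∧
      ‖invXMultiple a (k + 1) - invXMultiple a k - (2 * k + 1) * a‖ ≤
        3 / 5 * ‖a‖ ^ 3 * (((k : ℝ) + 1) ^ 6 - (k : ℝ) ^ 6) := by
  induction k with
  | zero =>
    simp only [invXMultiple, CharP.cast_eq_zero]
    norm_num
  | succ k ih =>
    obtain ⟨hval, hdiff⟩ := ih (sq_mul_norm_le_of_succ hk)
    have hval' : ‖invXMultiple a (k + 1) - ((k + 1 : ℕ) : 𝕜) ^ 2 * a‖ ≤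
        3 / 5 * ‖a‖ ^ 3 * ((k + 1 : ℕ) : ℝ) ^ 6 := by
      have hsplit : invXMultiple a (k + 1) - ((k + 1 : ℕ) : 𝕜) ^ 2 * a =
          (invXMultiple a (k + 1) - invXMultiple a k - (2 * k + 1) * a) +
            (invXMultiple a k - (k : 𝕜) ^ 2 * a) := by
        push_cast
        ring
      rw [hsplit]
      refine (norm_add_le_of_le hdiff hval).trans_eq ?_
      push_cast
      ring
    refine ⟨hval', ?_⟩
    have hsecond := norm_pairSum_sub_le_of_sq_mul_norm_le (Nat.le_add_left 1 k) hk hval'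
    have hsplit : invXMultiple a (k + 2) - invXMultiple a (k + 1) - (2 * (k + 1 : ℕ) + 1) * a =
        (pairSum a (invXMultiple a (k + 1)) - 2 * (a + invXMultiple a (k + 1))) +
          (invXMultiple a (k + 1) - invXMultiple a k - (2 * k + 1) * a) := by
      rw [invXMultiple]
      push_cast
      ring
    rw [hsplit]
    refine (norm_add_le_of_le hsecond hdiff).trans ?_
    -- With `t = k + 1`, the second difference of `t ^ 6` is `30 * t ^ 2 * (t ^ 2 + 1) + 2`.
    push_cast
    linarith [pow_nonneg (norm_nonneg a) 3]

lemma sq_mul_norm_le_norm_invXMultiple {k : ℕ} (hk : (k : ℝ) ^ 2 * ‖a‖ ≤ 1 / 2) :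
    17 / 20 * ((k : ℝ) ^ 2 * ‖a‖) ≤ ‖invXMultiple a k‖ := by
  have hval := norm_sub_le_of_sq_mul_norm_le hk (norm_invXMultiple_sub_le_and_norm_diff_le k hk).1
  linarith [norm_natCast_sq_mul k a,
    norm_le_norm_add_norm_sub (invXMultiple a k) ((k : 𝕜) ^ 2 * a)]

lemma invXMultiple_succ_ne {k : ℕ} (ha : a ≠ 0) (hk₀ : 1 ≤ k)
    (hk : (2 * (k : ℝ) + 1) ^ 2 * ‖a‖ < 2) :
    invXMultiple a (k + 1) ≠ invXMultiple a k := by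
  intro heq
  have hk₁ : (1 : ℝ) ≤ k := by exact_mod_cast hk₀
  have hA : (k : ℝ) ^ 2 * ‖a‖ ≤ 1 / 2 := sq_mul_norm_le_of_two_mul_add_one hk
  have hB : ((k : ℝ) + 1) ^ 2 * ‖a‖ ≤ 8 / 9 := by
    have hsq : (3 * ((k : ℝ) + 1)) ^ 2 ≤ (2 * (2 * (k : ℝ) + 1)) ^ 2 := by
      gcongr ?_ ^ 2
      linarith
    linarith [mul_le_mul_of_nonneg_right hsq (norm_nonneg a)]
  have hpos : 0 < (2 * (k : ℝ) + 1) * ‖a‖ := mul_pos (by positivity) (norm_pos_iff.mpr ha)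
  have hnorm : ‖(2 * (k : 𝕜) + 1) * a‖ = (2 * (k : ℝ) + 1) * ‖a‖ := by
    rw [norm_mul]
    exact_mod_cast congrArg (· * ‖a‖) (RCLike.norm_natCast (K := 𝕜) (2 * k + 1))
  have hdiff := (norm_invXMultiple_sub_le_and_norm_diff_le k hA).2
  rw [heq, sub_self, zero_sub, norm_neg, hnorm] at hdiff
  refine hdiff.not_gt ?_
  set A := (k : ℝ) ^ 2 * ‖a‖
  set B := ((k : ℝ) + 1) ^ 2 * ‖a‖
  calc 3 / 5 * ‖a‖ ^ 3 * (((k : ℝ) + 1) ^ 6 - (k : ℝ) ^ 6)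
      = 3 / 5 * (B ^ 2 + B * A + A ^ 2) * ((2 * (k : ℝ) + 1) * ‖a‖) := by ring
    _ ≤ 3 / 5 * ((8 / 9) ^ 2 + 8 / 9 * (1 / 2) + (1 / 2) ^ 2) * ((2 * (k : ℝ) + 1) * ‖a‖) := by
        gcongr
    _ < (2 * (k : ℝ) + 1) * ‖a‖ := by linarith

end Estimates

section Torsion

variable {𝕜 : Type*} [RCLike 𝕜] [DecidableEq 𝕜] {c a : 𝕜} {P : (congruentCurve c).Point}

namespace HasInvX

lemma nsmul_and_succ_nsmul (hc : c ≠ 0) (hP : HasInvX P a) (k : ℕ)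
    (hk : (k : ℝ) ^ 2 * ‖a‖ ≤ 1 / 2) :
    HasInvX (k • P) (invXMultiple a k) ∧ HasInvX ((k + 1) • P) (invXMultiple a (k + 1)) := by
  induction k with
  | zero => simpa [invXMultiple] using hP
  | succ k ih =>
    obtain ⟨hpred, hcur⟩ := ih (sq_mul_norm_le_of_succ hk)
    refine ⟨hcur, ?_⟩
    have hne : 1 + a * invXMultiple a (k + 1) ≠ 0 :=
      one_add_mul_ne_zero_of_sq_mul_norm_le (Nat.le_add_left 1 k) hk
        (norm_invXMultiple_sub_le_and_norm_diff_le (k + 1) hk).1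
    have hsub : HasInvX (P - (k + 1) • P) (invXMultiple a k) := by
      simpa [succ_nsmul] using hpred.neg
    rw [succ_nsmul']
    exact hP.add hc hcur hsub hne

lemma two_mul_nsmul_ne_zero (hc : c ≠ 0) (hP : HasInvX P a) (ha : a ≠ 0) {k : ℕ} (hk₀ : 1 ≤ k)
    (hk : (k : ℝ) ^ 2 * ‖a‖ ≤ 1 / 2) : (2 * k) • P ≠ 0 := by
  intro hzero
  have hkP := (hP.nsmul_and_succ_nsmul hc k hk).1
  set u := invXMultiple a k
  have hk₁ : (0 : ℝ) < k := by exact_mod_cast hk₀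
  have hlow : 0 < ‖u‖ := lt_of_lt_of_le
    (mul_pos (by norm_num) (mul_pos (pow_pos hk₁ 2) (norm_pos_iff.mpr ha)))
    (sq_mul_norm_le_norm_invXMultiple hk)
  have hup : ‖u‖ < 1 := by
    linarith [norm_le_of_sq_mul_norm_le hk (norm_invXMultiple_sub_le_and_norm_diff_le k hk).1]
  have hsq : ‖u * u‖ < 1 := by
    rw [norm_mul]
    exact mul_lt_one_of_nonneg_of_lt_one_left (norm_nonneg u) hup hup.le
  have hadd : 1 + u * u ≠ 0 := one_add_ne_zero_of_norm_lt_one hsq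
  have hsub : 1 - u * u ≠ 0 := by
    simpa [sub_eq_add_neg] using one_add_ne_zero_of_norm_lt_one ((norm_neg (u * u)).trans_lt hsq)
  have hdouble := hkP.add_self hc hadd
  rw [← two_nsmul, ← mul_nsmul', hzero, zero_iff] at hdouble
  exact pairSum_self_ne_zero (norm_pos_iff.mp hlow) hadd hsub hdouble

lemma two_mul_add_one_nsmul_ne_zero (hc : c ≠ 0) (hP : HasInvX P a) (ha : a ≠ 0) {k : ℕ}
    (hk₀ : 1 ≤ k) (hk : (2 * (k : ℝ) + 1) ^ 2 * ‖a‖ < 2) : (2 * k + 1) • P ≠ 0 := by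
  intro hzero
  obtain ⟨hcur, hsucc⟩ := hP.nsmul_and_succ_nsmul hc k (sq_mul_norm_le_of_two_mul_add_one hk)
  have hneg : (k + 1) • P = -(k • P) := by
    rw [eq_neg_iff_add_eq_zero, ← add_nsmul, ← hzero]
    congr 1
    ring
  rw [hneg] at hsucc
  exact invXMultiple_succ_ne ha hk₀ hk (hsucc.unique hc hcur.neg)

lemma two_le_sq_mul_norm (hc : c ≠ 0) (hP : HasInvX P a) (ha : a ≠ 0) {n : ℕ} (hn : n ≠ 0)
    (hzero : n • P = 0) : 2 ≤ (n : ℝ) ^ 2 * ‖a‖ := by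
  by_contra! hlt
  obtain ⟨k, rfl | rfl⟩ := n.even_or_odd'
  · refine hP.two_mul_nsmul_ne_zero hc ha (by lia) ?_ hzero
    push_cast at hlt
    linarith
  · rcases k.eq_zero_or_pos with rfl | hk
    · rw [mul_zero, zero_add, one_nsmul] at hzero
      rw [hzero] at hP
      exact ha hP
    · exact hP.two_mul_add_one_nsmul_ne_zero hc ha hk (by exact_mod_cast hlt) hzero

end HasInvX

theorem stmt3_general (hc : c ≠ 0) {n : ℤ} (hn : n ≠ 0) {x y : 𝕜}
    (h : (congruentCurve c).Nonsingular x y) (horder : n • (Point.some x y h) = 0) :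
    ‖x‖ ≤ 1 / 2 * (n : ℝ) ^ 2 * ‖c‖ := by
  rcases eq_or_ne x 0 with rfl | hx
  · rw [norm_zero]
    positivity
  have hinv : HasInvX (Point.some x y h) (c / x) := mul_div_cancel₀ c hx
  have hbound := hinv.two_le_sq_mul_norm hc (div_ne_zero hc hx) (Int.natAbs_ne_zero.mpr hn)
    (natAbs_nsmul_eq_zero.mpr horder)
  rw [norm_div, ← mul_div_assoc, le_div_iff₀ (norm_pos_iff.mpr hx), Nat.cast_natAbs, Int.cast_abs,
    sq_abs] at hbound
  linarith

end Torsion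

theorem stmt3 (N : ℕ) (hN : 1 ≤ N) (n : ℤ) (hn : 1 ≤ n)
    (x y : ℂ) (h : (congruentCurveC N).Nonsingular x y)
    (horder : n • (WeierstrassCurve.Affine.Point.some x y h) = 0) :
    ‖x‖ ≤ (1 / 2 : ℝ) * (n : ℝ) ^ 2 * (N : ℝ) := by
  simpa using stmt3_general (c := (N : ℂ)) (by exact_mod_cast (by lia : N ≠ 0)) (by lia) h horder
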